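/- arXiv:1505.02490 — 2 statements merged into one kernel-verified Lean document; each statement's English description precedes it below -/
import Mathlib

section
/- Let α ∈ (0,1) and τ ∈ (-1,0). If C(τ) = 0, then τ = α - 1; that is, α - 1 is the unique zero of C in the interval (-1,0). -/
open MeasureTheory Set

/-!
The map `τ ↦ C(τ)` is convex, because `τ ↦ b ^ τ` is convex for every `b > 0`, and
`C(0) = -1 / (2α) < 0`; hence `C` has at most one zero in `(-1, 0)`. That `C(α - 1) = 0` is seen
in the variable `v = 1 / t`. Truncated to `(0, N]` and with `v` shifted by `1` in the first term,
`C(α - 1)` becomes, up to an integral over `[N - 1, N]`, the integral of the derivative of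
`(v (v + 1)) ^ α / α` minus that of `2 v ^ (2α - 1)`; what is left over is `O(N ^ (2α - 2))`.
-/

/-- The second difference with step `t`, centred at `1`, of the truncated power `x ↦ x₊ ^ τ`, which
vanishes for `x ≤ 0`. The indicator encodes `(1 - t)₊ ^ τ` for `0 < t` only. -/
noncomputable def secondDiff (τ t : ℝ) : ℝ :=
  (Ioo (0 : ℝ) 1).indicator (fun s => (1 - s) ^ τ) t + (1 + t) ^ τ - 2

/-- The constant `C(τ)`: up to a negative factor depending only on `α`, the value at `1` of the
fractional Laplacian of order `2α` of the truncated power `x ↦ x₊ ^ τ`. -/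
noncomputable def powerCoeff (α τ : ℝ) : ℝ :=
  ∫ t in Ioi (0 : ℝ), t ^ (-1 - 2 * α) * secondDiff τ t

section SecondDiff

variable {τ t : ℝ}

lemma secondDiff_of_mem_Ioo (ht : t ∈ Ioo (0 : ℝ) 1) :
    secondDiff τ t = (1 - t) ^ τ + (1 + t) ^ τ - 2 := by
  rw [secondDiff, indicator_of_mem ht]

lemma secondDiff_of_one_le (ht : 1 ≤ t) : secondDiff τ t = (1 + t) ^ τ - 2 := by
  rw [secondDiff, indicator_of_notMem fun h => h.2.not_ge ht, zero_add]

lemma measurable_secondDiff (τ : ℝ) : Measurable (secondDiff τ) :=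
  ((Measurable.indicator (by fun_prop) measurableSet_Ioo).add (by fun_prop)).sub_const 2

lemma convexOn_secondDiff (ht : 0 < t) : ConvexOn ℝ univ fun τ => secondDiff τ t := by
  have hadd : ConvexOn ℝ univ fun τ : ℝ => (1 + t) ^ τ := convexOn_rpow_left (by linarith)
  rcases lt_or_ge t 1 with h | h
  · have hsub : ConvexOn ℝ univ fun τ : ℝ => (1 - t) ^ τ := convexOn_rpow_left (by linarith)
    simpa only [secondDiff_of_mem_Ioo ⟨ht, h⟩, sub_eq_add_neg] using!
      (hsub.add hadd).add_const (-2)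
  · simpa only [secondDiff_of_one_le h, sub_eq_add_neg] using! hadd.add_const (-2)

lemma secondDiff_zero (ht : 0 < t) : secondDiff 0 t = (Ici (1 : ℝ)).indicator (fun _ => -1) t := by
  rcases lt_or_ge t 1 with h | h
  · rw [secondDiff_of_mem_Ioo ⟨ht, h⟩, indicator_of_notMem (notMem_Ici.2 h)]
    norm_num
  · rw [secondDiff_of_one_le h, indicator_of_mem (mem_Ici.2 h)]
    norm_num

lemma secondDiff_nonneg (hτ : τ ≤ 0) (ht : t ∈ Ioo (0 : ℝ) 1) : 0 ≤ secondDiff τ t := by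
  have hsub : 0 < 1 - t := by linarith [ht.2]
  have hadd : 0 < 1 + t := by linarith [ht.1]
  have hprod : 1 ≤ (1 - t) ^ τ * (1 + t) ^ τ := by
    rw [← Real.mul_rpow hsub.le hadd.le]
    exact Real.one_le_rpow_of_pos_of_le_one_of_nonpos (by positivity)
      (by nlinarith [sq_nonneg t]) hτ
  rw [secondDiff_of_mem_Ioo ht]
  nlinarith [sq_nonneg ((1 - t) ^ τ - (1 + t) ^ τ), Real.rpow_pos_of_pos hsub τ,
    Real.rpow_pos_of_pos hadd τ]

lemma secondDiff_le (hτ : τ ∈ Icc (-1) 0) (ht : t ∈ Ioo (0 : ℝ) 1) :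
    secondDiff τ t ≤ 2 * t ^ 2 * (1 - t) ^ τ := by
  have hsub : 0 < 1 - t := by linarith [ht.2]
  have hadd : 0 < 1 + t := by linarith [ht.1]
  have hone : (1 - t) ^ τ * (1 - t) ^ (-τ) = 1 := by
    rw [← Real.rpow_add hsub, add_neg_cancel, Real.rpow_zero]
  set a := (1 - t) ^ (-τ) with ha
  set y := (1 + t) ^ τ with hy
  have ha_ge : 1 - t ≤ a :=
    Real.self_le_rpow_of_le_one hsub.le (by linarith [ht.1]) (by linarith [hτ.1])
  have ha_le : a ≤ 1 := Real.rpow_le_one hsub.le (by linarith [ht.1]) (by linarith [hτ.2])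
  have hy_pos : 0 < y := Real.rpow_pos_of_pos hadd τ
  have hy_le : y ≤ 1 := Real.rpow_le_one_of_one_le_of_nonpos (by linarith [ht.1]) hτ.2
  have hya : y - a ≤ t ^ 2 := by
    have hc : 1 - t ^ 2 ≤ (1 - t ^ 2) ^ (-τ) :=
      Real.self_le_rpow_of_le_one (by nlinarith) (by nlinarith) (by linarith [hτ.1])
    have ha_eq : a = (1 - t ^ 2) ^ (-τ) * y := by
      rw [ha, hy, show 1 - t ^ 2 = (1 - t) * (1 + t) by ring, Real.mul_rpow hsub.le hadd.le,
        mul_assoc, ← Real.rpow_add hadd, neg_add_cancel, Real.rpow_zero, mul_one]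
    nlinarith
  calc secondDiff τ t = (1 - t) ^ τ * ((1 - a) ^ 2 + a * (y - a)) := by
        rw [secondDiff_of_mem_Ioo ht]
        linear_combination (2 - y) * hone
    _ ≤ (1 - t) ^ τ * (t ^ 2 + t ^ 2) := by
        have hsq : (1 - a) ^ 2 ≤ t ^ 2 := pow_le_pow_left₀ (by linarith) (by linarith) 2
        have hmul : a * (y - a) ≤ t ^ 2 :=
          (mul_le_mul_of_nonneg_left hya (hsub.le.trans ha_ge)).trans
            (mul_le_of_le_one_left (sq_nonneg t) ha_le)
        gcongr
    _ = 2 * t ^ 2 * (1 - t) ^ τ := by ring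

lemma abs_secondDiff_le_two (hτ : τ ≤ 0) (ht : 1 ≤ t) : |secondDiff τ t| ≤ 2 := by
  have hle : (1 + t) ^ τ ≤ 1 := Real.rpow_le_one_of_one_le_of_nonpos (by linarith) hτ
  have hpos : 0 < (1 + t) ^ τ := Real.rpow_pos_of_pos (by linarith) τ
  rw [secondDiff_of_one_le ht, abs_le]
  constructor <;> linarith

end SecondDiff

lemma integrableOn_rpow_mul_one_sub_rpow {r s : ℝ} (hr : -1 < r) (hs : -1 < s) :
    IntegrableOn (fun t : ℝ => t ^ r * (1 - t) ^ s) (Ioo 0 1) := by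
  have hbeta := (Complex.betaIntegral_convergent (u := ↑(r + 1)) (v := ↑(s + 1))
    (by rw [Complex.ofReal_re]; linarith) (by rw [Complex.ofReal_re]; linarith)).norm
  rw [intervalIntegrable_iff_integrableOn_Ioo_of_le zero_le_one] at hbeta
  refine hbeta.congr_fun (fun t ht => ?_) measurableSet_Ioo
  have hsub : 0 < 1 - t := by linarith [ht.2]
  have hcast : 1 - (t : ℂ) = ↑(1 - t) := by push_cast; rfl
  simp only [norm_mul, hcast, Complex.norm_cpow_eq_rpow_re_of_pos ht.1,
    Complex.norm_cpow_eq_rpow_re_of_pos hsub, Complex.sub_re, Complex.ofReal_re, Complex.one_re,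
    add_sub_cancel_right]

section PowerCoeff

variable {α τ : ℝ}

lemma integrableOn_rpow_mul_secondDiff_Ioo (hα : α < 1) (hτ : τ ∈ Ioc (-1) 0) :
    IntegrableOn (fun t => t ^ (-1 - 2 * α) * secondDiff τ t) (Ioo 0 1) := by
  have hbound :=
    (integrableOn_rpow_mul_one_sub_rpow (r := 1 - 2 * α) (by linarith) hτ.1).const_mul 2
  refine hbound.mono' (((measurable_id.pow_const _).mul
    (measurable_secondDiff τ)).aestronglyMeasurable) ?_
  filter_upwards [ae_restrict_mem measurableSet_Ioo] with t ht
  have hpow : t ^ (-1 - 2 * α) * t ^ 2 = t ^ (1 - 2 * α) := by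
    rw [← Real.rpow_two, ← Real.rpow_add ht.1]
    ring_nf
  have hpos : 0 < t ^ (-1 - 2 * α) := Real.rpow_pos_of_pos ht.1 _
  rw [Real.norm_of_nonneg (mul_nonneg hpos.le (secondDiff_nonneg hτ.2 ht))]
  calc t ^ (-1 - 2 * α) * secondDiff τ t
      ≤ t ^ (-1 - 2 * α) * (2 * t ^ 2 * (1 - t) ^ τ) := by
        gcongr
        exact secondDiff_le ⟨hτ.1.le, hτ.2⟩ ht
    _ = 2 * (t ^ (1 - 2 * α) * (1 - t) ^ τ) := by rw [← hpow]; ring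

lemma integrableOn_rpow_mul_secondDiff_Ici (hα : 0 < α) (hτ : τ ≤ 0) :
    IntegrableOn (fun t => t ^ (-1 - 2 * α) * secondDiff τ t) (Ici 1) := by
  have hpow : IntegrableOn (fun t : ℝ => t ^ (-1 - 2 * α)) (Ici 1) :=
    (integrableOn_Ici_iff_integrableOn_Ioi (by simp)).2
      (integrableOn_Ioi_rpow_of_lt (by linarith) one_pos)
  refine hpow.mul_bdd (c := 2) (measurable_secondDiff τ).aestronglyMeasurable ?_
  filter_upwards [ae_restrict_mem measurableSet_Ici] with t ht
  exact abs_secondDiff_le_two hτ ht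

lemma integrableOn_rpow_mul_secondDiff (hα : α ∈ Ioo 0 1) (hτ : τ ∈ Ioc (-1) 0) :
    IntegrableOn (fun t => t ^ (-1 - 2 * α) * secondDiff τ t) (Ioi 0) := by
  rw [← Ioo_union_Ici_eq_Ioi zero_lt_one]
  exact (integrableOn_rpow_mul_secondDiff_Ioo hα.2 hτ).union
    (integrableOn_rpow_mul_secondDiff_Ici hα.1 hτ.2)

lemma convexOn_powerCoeff (hα : α ∈ Ioo 0 1) : ConvexOn ℝ (Ioc (-1) 0) (powerCoeff α) := by
  refine integral_convexOn_of_integrand_ae (convex_Ioc _ _) ?_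
    fun τ hτ => integrableOn_rpow_mul_secondDiff hα hτ
  filter_upwards [ae_restrict_mem measurableSet_Ioi] with t ht
  exact ((convexOn_secondDiff ht).smul (Real.rpow_nonneg (le_of_lt ht) _)).subset
    (subset_univ _) (convex_Ioc _ _)

lemma powerCoeff_zero (hα : 0 < α) : powerCoeff α 0 = -(1 / (2 * α)) := by
  calc powerCoeff α 0
      = ∫ t in Ioi (0 : ℝ), (Ici (1 : ℝ)).indicator (fun t => -t ^ (-1 - 2 * α)) t := by
        refine setIntegral_congr_fun measurableSet_Ioi fun t ht => ?_
        simp only [secondDiff_zero ht, indicator_apply, mul_ite, mul_neg, mul_one, mul_zero]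
    _ = -∫ t in Ioi (1 : ℝ), t ^ (-1 - 2 * α) := by
        rw [setIntegral_indicator measurableSet_Ici, inter_eq_right.2 (Ici_subset_Ioi.2 one_pos),
          integral_Ici_eq_integral_Ioi, integral_neg]
    _ = -(1 / (2 * α)) := by
        rw [integral_Ioi_rpow_of_lt (by linarith) one_pos, Real.one_rpow,
          show -1 - 2 * α + 1 = -(2 * α) by ring, neg_div_neg_eq]

end PowerCoeff

/-- The integrand of `C(τ)` in the variable `v = 1 / t`, with the Jacobian `v⁻²` absorbed into the
power of `v`. -/
noncomputable def reciprocalIntegrand (α τ v : ℝ) : ℝ :=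
  v ^ (2 * α - 1 - τ) *
    ((Ioi (1 : ℝ)).indicator (fun v => (v - 1) ^ τ) v + (v + 1) ^ τ - 2 * v ^ τ)

section Reciprocal

variable {α τ : ℝ}

lemma rpow_mul_secondDiff_inv {v : ℝ} (hv : 0 < v) :
    v ^ τ * secondDiff τ v⁻¹ =
      (Ioi (1 : ℝ)).indicator (fun v => (v - 1) ^ τ) v + (v + 1) ^ τ - 2 * v ^ τ := by
  have hadd : v ^ τ * (1 + v⁻¹) ^ τ = (v + 1) ^ τ := by
    rw [← Real.mul_rpow hv.le (by positivity), mul_add, mul_inv_cancel₀ hv.ne', mul_one]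
  rcases lt_or_ge 1 v with h | h
  · have hinv : v⁻¹ < 1 := inv_lt_one_of_one_lt₀ h
    have hsub : v ^ τ * (1 - v⁻¹) ^ τ = (v - 1) ^ τ := by
      rw [← Real.mul_rpow hv.le (by linarith), mul_sub, mul_inv_cancel₀ hv.ne', mul_one]
    rw [secondDiff_of_mem_Ioo ⟨inv_pos.2 hv, hinv⟩, indicator_of_mem (mem_Ioi.2 h), ← hadd, ← hsub]
    ring
  · rw [secondDiff_of_one_le ((one_le_inv₀ hv).2 h), indicator_of_notMem (notMem_Ioi.2 h), ← hadd]
    ring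

lemma eqOn_reciprocalIntegrand :
    EqOn (fun v => (|(-1 : ℝ)| * v ^ ((-1 : ℝ) - 1)) •
        ((v ^ (-1 : ℝ)) ^ (-1 - 2 * α) * secondDiff τ (v ^ (-1 : ℝ))))
      (reciprocalIntegrand α τ) (Ioi 0) := by
  intro v (hv : 0 < v)
  have hpow : v ^ ((-1 : ℝ) - 1) * (v ^ (-1 : ℝ)) ^ (-1 - 2 * α) = v ^ (2 * α - 1 - τ) * v ^ τ := by
    rw [← Real.rpow_mul hv.le, ← Real.rpow_add hv, ← Real.rpow_add hv]
    ring_nf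
  simp only [abs_neg, abs_one, one_mul, smul_eq_mul]
  rw [← mul_assoc, hpow, mul_assoc, Real.rpow_neg_one, rpow_mul_secondDiff_inv hv,
    reciprocalIntegrand]

lemma integrableOn_reciprocalIntegrand (hα : α ∈ Ioo 0 1) (hτ : τ ∈ Ioc (-1) 0) :
    IntegrableOn (reciprocalIntegrand α τ) (Ioi 0) :=
  ((integrableOn_Ioi_comp_rpow_iff _ (by norm_num)).2
    (integrableOn_rpow_mul_secondDiff hα hτ)).congr_fun eqOn_reciprocalIntegrand measurableSet_Ioi

lemma integral_reciprocalIntegrand (α τ : ℝ) :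
    ∫ v in Ioi (0 : ℝ), reciprocalIntegrand α τ v = powerCoeff α τ := by
  rw [powerCoeff,
    ← integral_comp_rpow_Ioi (fun t => t ^ (-1 - 2 * α) * secondDiff τ t) (p := -1) (by norm_num)]
  exact (setIntegral_congr_fun measurableSet_Ioi eqOn_reciprocalIntegrand).symm

end Reciprocal

section ShiftedProducts

variable {α : ℝ}

lemma intervalIntegrable_rpow_mul_add_one_rpow {r a b : ℝ} (s : ℝ) (hr : -1 < r) (ha : 0 ≤ a)
    (hb : 0 ≤ b) : IntervalIntegrable (fun v : ℝ => v ^ r * (v + 1) ^ s) volume a b := by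
  refine (intervalIntegral.intervalIntegrable_rpow' hr).mul_continuousOn fun v hv => ?_
  have hv_nonneg : 0 ≤ v := (le_min ha hb).trans hv.1
  exact (ContinuousAt.rpow_const (by fun_prop) (Or.inl (by positivity))).continuousWithinAt

lemma integral_deriv_rpow_mul_add_one_rpow {M : ℝ} (hα : 0 < α) (hM : 0 ≤ M) :
    ∫ v in (0 : ℝ)..M, (v ^ (α - 1) * (v + 1) ^ α + v ^ α * (v + 1) ^ (α - 1)) =
      M ^ α * (M + 1) ^ α / α := by
  have hderiv : ∀ v ∈ Ioo 0 M, HasDerivAt (fun v : ℝ => v ^ α * (v + 1) ^ α / α)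
      (v ^ (α - 1) * (v + 1) ^ α + v ^ α * (v + 1) ^ (α - 1)) v := by
    intro v hv
    have hpow := Real.hasDerivAt_rpow_const (p := α) (Or.inl hv.1.ne')
    have hpow_add := ((hasDerivAt_id' v).add_const 1).rpow_const (p := α)
      (Or.inl (by linarith [hv.1]))
    refine ((hpow.mul hpow_add).div_const α).congr_deriv ?_
    field_simp
  have hcont : Continuous fun v : ℝ => v ^ α * (v + 1) ^ α / α :=
    ((Real.continuous_rpow_const hα.le).mul
      ((Real.continuous_rpow_const hα.le).comp (continuous_add_const 1))).div_const α
  rw [intervalIntegral.integral_eq_sub_of_hasDerivAt_of_le hM hcont.continuousOn hderiv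
    ((intervalIntegrable_rpow_mul_add_one_rpow _ (by linarith) le_rfl hM).add
      (intervalIntegrable_rpow_mul_add_one_rpow _ (by linarith) le_rfl hM)),
    Real.zero_rpow hα.ne', zero_mul, zero_div, sub_zero]

lemma abs_rpow_mul_add_one_rpow_sub_le {v N : ℝ} (hα : α ∈ Icc 0 1) (hN : 1 < N)
    (hv : v ∈ Icc (N - 1) N) :
    |v ^ α * (v + 1) ^ (α - 1) - N ^ α * v ^ (α - 1)| ≤ (N - 1) ^ (2 * α - 2) := by
  have hN_pos : 0 < N - 1 := by linarith
  have hv_pos : 0 < v := hN_pos.trans_le hv.1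
  have hle : v ^ α * (v + 1) ^ (α - 1) ≤ N ^ α * v ^ (α - 1) :=
    mul_le_mul (Real.rpow_le_rpow hv_pos.le hv.2 hα.1)
      (Real.rpow_le_rpow_of_nonpos hv_pos (by linarith) (by linarith [hα.2]))
      (by positivity) (by positivity)
  rw [abs_sub_comm, abs_of_nonneg (sub_nonneg.2 hle)]
  calc N ^ α * v ^ (α - 1) - v ^ α * (v + 1) ^ (α - 1)
      ≤ (v + 1) ^ α * v ^ (α - 1) - v ^ α * (v + 1) ^ (α - 1) := by
        gcongr
        · exact hα.1
        · linarith [hv.1]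
    _ = v ^ (α - 1) * (v + 1) ^ (α - 1) := by
        rw [Real.rpow_sub_one hv_pos.ne', Real.rpow_sub_one (by positivity)]
        field_simp
        ring
    _ ≤ (N - 1) ^ (α - 1) * (N - 1) ^ (α - 1) := by
        have hbase : ∀ w, N - 1 ≤ w → w ^ (α - 1) ≤ (N - 1) ^ (α - 1) := fun w hw =>
          Real.rpow_le_rpow_of_nonpos hN_pos hw (by linarith [hα.2])
        exact mul_le_mul (hbase v hv.1) (hbase (v + 1) (by linarith [hv.1])) (by positivity)
          (by positivity)
    _ = (N - 1) ^ (2 * α - 2) := by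
        rw [← Real.rpow_add hN_pos]
        ring_nf

end ShiftedProducts

section Shift

variable {E : Type*} [NormedAddCommGroup E] {f : ℝ → E} {c N : ℝ}

lemma intervalIntegrable_indicator_comp_sub (hc : 0 ≤ c) (hN : c ≤ N)
    (hf : IntervalIntegrable f volume 0 (N - c)) :
    IntervalIntegrable ((Ioi c).indicator fun v => f (v - c)) volume 0 N := by
  have hshift := hf.comp_sub_right c
  rw [zero_add, sub_add_cancel, intervalIntegrable_iff_integrableOn_Ioc_of_le hN] at hshift
  rwa [intervalIntegrable_iff_integrableOn_Ioc_of_le (hc.trans hN),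
    integrableOn_indicator_iff measurableSet_Ioi, inter_comm, Ioc_inter_Ioi, sup_of_le_right hc]

lemma integral_indicator_comp_sub [NormedSpace ℝ E] (f : ℝ → E) (hc : 0 ≤ c) (hN : c ≤ N) :
    ∫ v in (0 : ℝ)..N, (Ioi c).indicator (fun v => f (v - c)) v = ∫ w in (0 : ℝ)..N - c, f w := by
  rw [intervalIntegral.integral_of_le (hc.trans hN), setIntegral_indicator measurableSet_Ioi,
    Ioc_inter_Ioi, sup_of_le_right hc, ← intervalIntegral.integral_of_le hN,
    intervalIntegral.integral_comp_sub_right, sub_self]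

end Shift

section Root

variable {α N : ℝ}

lemma reciprocalIntegrand_sub_one {v : ℝ} (hv : 0 < v) :
    reciprocalIntegrand α (α - 1) v =
      (Ioi (1 : ℝ)).indicator (fun v => (v - 1) ^ (α - 1) * (v - 1 + 1) ^ α) v +
        v ^ α * (v + 1) ^ (α - 1) - 2 * v ^ (2 * α - 1) := by
  have hpow : v ^ α * v ^ (α - 1) = v ^ (2 * α - 1) := by
    rw [← Real.rpow_add hv]
    ring_nf
  rw [reciprocalIntegrand, show 2 * α - 1 - (α - 1) = α by ring, ← hpow]
  simp only [indicator_apply, sub_add_cancel]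
  split_ifs <;> ring

lemma integral_reciprocalIntegrand_sub_one_eq_add_sub (hα : 0 < α) (hN : 1 ≤ N) :
    ∫ v in (0 : ℝ)..N, reciprocalIntegrand α (α - 1) v =
      (∫ v in (0 : ℝ)..N - 1, v ^ (α - 1) * (v + 1) ^ α) +
        (∫ v in (0 : ℝ)..N, v ^ α * (v + 1) ^ (α - 1)) -
          ∫ v in (0 : ℝ)..N, 2 * v ^ (2 * α - 1) := by
  have hN_nonneg : 0 ≤ N := zero_le_one.trans hN
  have hshifted := intervalIntegrable_indicator_comp_sub zero_le_one hN
    (intervalIntegrable_rpow_mul_add_one_rpow α (r := α - 1) (by linarith) le_rfl (sub_nonneg.2 hN))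
  have hright := intervalIntegrable_rpow_mul_add_one_rpow (α - 1) (r := α) (by linarith) le_rfl
    hN_nonneg
  rw [intervalIntegral.integral_congr_ae (Filter.Eventually.of_forall fun v hv =>
      reciprocalIntegrand_sub_one (uIoc_of_le hN_nonneg ▸ hv).1),
    intervalIntegral.integral_sub (hshifted.add hright)
      ((intervalIntegral.intervalIntegrable_rpow' (by linarith)).const_mul 2),
    intervalIntegral.integral_add hshifted hright,
    integral_indicator_comp_sub (fun w => w ^ (α - 1) * (w + 1) ^ α) zero_le_one hN]

lemma integral_reciprocalIntegrand_sub_one (hα : 0 < α) (hN : 1 ≤ N) :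
    ∫ v in (0 : ℝ)..N, reciprocalIntegrand α (α - 1) v =
      ∫ v in (N - 1)..N, (v ^ α * (v + 1) ^ (α - 1) - N ^ α * v ^ (α - 1)) := by
  have hN_pos : 0 < N := zero_lt_one.trans_le hN
  have hN_sub : 0 ≤ N - 1 := sub_nonneg.2 hN
  have hright {a b : ℝ} (ha : 0 ≤ a) (hb : 0 ≤ b) :
      IntervalIntegrable (fun v : ℝ => v ^ α * (v + 1) ^ (α - 1)) volume a b :=
    intervalIntegrable_rpow_mul_add_one_rpow _ (by linarith) ha hb
  have hsplit := intervalIntegral.integral_add_adjacent_intervals (hright le_rfl hN_sub)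
    (hright hN_sub hN_pos.le)
  have htelescope := integral_deriv_rpow_mul_add_one_rpow hα hN_sub
  rw [intervalIntegral.integral_add
    (intervalIntegrable_rpow_mul_add_one_rpow _ (by linarith) le_rfl hN_sub)
    (hright le_rfl hN_sub), sub_add_cancel] at htelescope
  have hsquare : ∫ v in (0 : ℝ)..N, 2 * v ^ (2 * α - 1) = N ^ α * N ^ α / α := by
    rw [intervalIntegral.integral_const_mul, integral_rpow (Or.inl (by linarith)), sub_add_cancel,
      Real.zero_rpow (by positivity), ← Real.rpow_add hN_pos, ← two_mul]
    field_simp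
    ring
  have hlast : ∫ v in (N - 1)..N, N ^ α * v ^ (α - 1) =
      N ^ α * N ^ α / α - (N - 1) ^ α * N ^ α / α := by
    rw [intervalIntegral.integral_const_mul, integral_rpow (Or.inl (by linarith)), sub_add_cancel]
    ring
  rw [integral_reciprocalIntegrand_sub_one_eq_add_sub hα hN, intervalIntegral.integral_sub
    (hright hN_sub hN_pos.le)
    ((intervalIntegral.intervalIntegrable_rpow' (by linarith)).const_mul _)]
  linarith

lemma norm_integral_reciprocalIntegrand_sub_one_le (hα : α ∈ Ioc 0 1) (hN : 1 < N) :
    ‖∫ v in (0 : ℝ)..N, reciprocalIntegrand α (α - 1) v‖ ≤ (N - 1) ^ (2 * α - 2) := by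
  rw [integral_reciprocalIntegrand_sub_one hα.1 hN.le]
  refine (intervalIntegral.norm_integral_le_of_norm_le_const fun v hv => ?_).trans_eq
    (by rw [sub_sub_cancel, abs_one, mul_one])
  rw [uIoc_of_le (by linarith)] at hv
  exact abs_rpow_mul_add_one_rpow_sub_le (Ioc_subset_Icc_self hα) hN (Ioc_subset_Icc_self hv)

lemma powerCoeff_sub_one (hα : α ∈ Ioo 0 1) : powerCoeff α (α - 1) = 0 := by
  have hτ : α - 1 ∈ Ioc (-1 : ℝ) 0 := ⟨by linarith [hα.1], by linarith [hα.2]⟩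
  have hlim := intervalIntegral_tendsto_integral_Ioi 0
    (integrableOn_reciprocalIntegrand hα hτ) Filter.tendsto_id
  rw [integral_reciprocalIntegrand] at hlim
  have hbound : Filter.Tendsto (fun N : ℝ => (N - 1) ^ (2 * α - 2)) Filter.atTop (nhds 0) := by
    rw [← neg_sub 2 (2 * α)]
    exact (tendsto_rpow_neg_atTop (by linarith [hα.2])).comp
      (Filter.tendsto_atTop_add_const_right _ (-1) Filter.tendsto_id)
  refine tendsto_nhds_unique hlim (squeeze_zero_norm' ?_ hbound)
  filter_upwards [Filter.eventually_gt_atTop 1] with N hN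
  exact norm_integral_reciprocalIntegrand_sub_one_le (Ioo_subset_Ioc_self hα) hN

end Root

/-- For `α ∈ (0,1)` and `τ ∈ (-1,0)`, if `C(τ) = 0` then `τ = α - 1`:
`α - 1` is the unique zero of `C` in `(-1,0)`. -/
theorem stmt_2 (α τ : ℝ) (hα : α ∈ Ioo (0:ℝ) 1) (hτ : τ ∈ Ioo (-1:ℝ) 0)
    (h : ∫ t in Ioi (0:ℝ), t ^ (-1 - 2*α) *
      ((Ioo (0:ℝ) 1).indicator (fun s => (1 - s) ^ τ) t + (1 + t) ^ τ - 2) = 0) :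
    τ = α - 1 := by
  have hzero_τ : powerCoeff α τ = 0 := h
  have hzero_root : powerCoeff α (α - 1) = 0 := powerCoeff_sub_one hα
  have hroot_mem : α - 1 ∈ Ioo (-1 : ℝ) 0 := ⟨by linarith [hα.1], by linarith [hα.2]⟩
  have hneg : powerCoeff α 0 < 0 := by
    rw [powerCoeff_zero hα.1, neg_lt_zero]
    exact one_div_pos.2 (mul_pos two_pos hα.1)
  have hzero_max : powerCoeff α (max τ (α - 1)) = 0 := by
    rcases max_choice τ (α - 1) with hmax | hmax <;> rwa [hmax]
  have hanti : StrictAntiOn (powerCoeff α) (Ioc (-1) 0 ∩ Iic (max τ (α - 1))) :=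
    (convexOn_powerCoeff hα).strictAntiOn (right_mem_Ioc.2 (by norm_num))
      (max_lt hτ.2 hroot_mem.2) (hneg.trans_eq hzero_max.symm)
  exact hanti.injOn ⟨Ioo_subset_Ioc_self hτ, mem_Iic.2 (le_max_left _ _)⟩
    ⟨Ioo_subset_Ioc_self hroot_mem, mem_Iic.2 (le_max_right _ _)⟩ (hzero_τ.trans hzero_root.symm)
end

section
/- Let N ≥ 2, α ∈ (0,1), η > 0 and k > 0, and let g : (0,∞) → [0,∞) be continuous and nondecreasing with ∫_1^∞ g(s) s^{-1-(1+α)/(1-α)} ds < ∞. Then lim_{s→0⁺} s^{1-α} ∫_{Q_η} y_N^α |s e_N - y|^{-(N-α)} g(k · y_N^{α-1}) dy = 0. -/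
open MeasureTheory Set Filter

open scoped ENNReal Topology RealInnerProductSpace

/-!
Enlarge `Q_η` to the whole slab `0 < ⟪e, y⟫ < η`, where `e` is a unit vector. Apart from the kernel,
the integrand depends only on the height `t = ⟪e, y⟫`, and by homogeneity the kernel
`‖s • e - y‖ ^ (-(N - α))` integrates over the hyperplane at height `t` to `C * |s - t| ^ (α - 1)`.
This leaves the one-dimensional integral of `f t * |1 - t / s| ^ (α - 1)` with
`f t = t ^ α * g (k * t ^ (α - 1))` on `(0, η)`. By the substitution `t ↦ k * t ^ (α - 1)`, the
subcriticality condition on `g` says that `f` is integrable at `0`. Away from `t = s` the rescaled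
kernel is bounded and tends to `0` as `s → 0`, so dominated convergence applies. Near `t = s` the
kernel is only integrable, but `t * f t → 0`: since `g` is monotone, `t * f t` is at most a constant
times the integral of `f` over `(0, t)`.
-/

section Scaling

variable {E : Type*} [NormedAddCommGroup E] [NormedSpace ℝ E] [FiniteDimensional ℝ E]
  [MeasurableSpace E] [BorelSpace E] (μ : Measure E) [μ.IsAddHaarMeasure]

theorem lintegral_comp_inv_smul (f : E → ℝ≥0∞) {a : ℝ} (ha : 0 < a) :
    ∫⁻ x, f (a⁻¹ • x) ∂μ = ENNReal.ofReal (a ^ Module.finrank ℝ E) * ∫⁻ x, f x ∂μ := by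
  have hemb := (MeasurableEquiv.smul₀ a⁻¹ (inv_ne_zero ha.ne') : E ≃ᵐ E).measurableEmbedding
  calc ∫⁻ x, f (a⁻¹ • x) ∂μ = ∫⁻ x, f x ∂(μ.map (a⁻¹ • ·)) := (hemb.lintegral_map f).symm
    _ = ENNReal.ofReal (a ^ Module.finrank ℝ E) * ∫⁻ x, f x ∂μ := by
      rw [Measure.map_addHaar_smul μ (inv_ne_zero ha.ne'), lintegral_smul_measure, inv_pow, inv_inv,
        abs_of_pos (by positivity), smul_eq_mul]

theorem lintegral_sq_add_norm_sq_rpow {a : ℝ} (ha : 0 < a) (r : ℝ) :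
    ∫⁻ x, ENNReal.ofReal ((a ^ 2 + ‖x‖ ^ 2) ^ (-r / 2)) ∂μ =
      ENNReal.ofReal (a ^ (Module.finrank ℝ E - r)) *
        ∫⁻ x, ENNReal.ofReal ((1 + ‖x‖ ^ 2) ^ (-r / 2)) ∂μ := by
  have hhom (x : E) : ENNReal.ofReal ((a ^ 2 + ‖x‖ ^ 2) ^ (-r / 2)) =
      ENNReal.ofReal (a ^ (-r)) * ENNReal.ofReal ((1 + ‖a⁻¹ • x‖ ^ 2) ^ (-r / 2)) := by
    have hfactor : a ^ 2 + ‖x‖ ^ 2 = a ^ 2 * (1 + ‖a⁻¹ • x‖ ^ 2) := by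
      rw [norm_smul, Real.norm_of_nonneg (by positivity)]
      field_simp
    rw [hfactor, Real.mul_rpow (by positivity) (by positivity),
      ENNReal.ofReal_mul (by positivity), ← Real.rpow_natCast_mul ha.le]
    push_cast
    ring_nf
  simp_rw [hhom]
  rw [lintegral_const_mul' _ _ ENNReal.ofReal_ne_top,
    lintegral_comp_inv_smul μ (fun x => ENNReal.ofReal ((1 + ‖x‖ ^ 2) ^ (-r / 2))) ha, ← mul_assoc,
    ← ENNReal.ofReal_mul (by positivity), ← Real.rpow_natCast, ← Real.rpow_add ha]
  ring_nf

end Scaling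

section Slicing

variable {E : Type*} [NormedAddCommGroup E] [InnerProductSpace ℝ E] {e : E}

theorem inner_smul_add_orthogonal (he : ‖e‖ = 1) (t : ℝ) (x : (ℝ ∙ e)ᗮ) :
    ⟪e, t • e + (x : E)⟫ = t := by
  rw [inner_add_right, inner_smul_right, real_inner_self_eq_norm_sq, he,
    Submodule.mem_orthogonal_singleton_iff_inner_right.1 x.2]
  ring

theorem norm_smul_sub_smul_add_orthogonal_rpow (he : ‖e‖ = 1) (s t r : ℝ) (x : (ℝ ∙ e)ᗮ) :
    ‖s • e - (t • e + (x : E))‖ ^ (-r) = (|s - t| ^ 2 + ‖x‖ ^ 2) ^ (-r / 2) := by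
  have hsq : ‖s • e - (t • e + (x : E))‖ ^ 2 = |s - t| ^ 2 + ‖x‖ ^ 2 := by
    rw [← sub_sub, ← sub_smul, norm_sub_sq_real, norm_smul, he, inner_smul_left,
      Submodule.mem_orthogonal_singleton_iff_inner_right.1 x.2]
    simp
  rw [← hsq, ← Real.rpow_natCast_mul (norm_nonneg _)]
  push_cast
  ring_nf

variable [FiniteDimensional ℝ E]

theorem finrank_orthogonal_span_singleton_of_norm_eq_one (he : ‖e‖ = 1) :
    (Module.finrank ℝ (ℝ ∙ e)ᗮ : ℝ) = Module.finrank ℝ E - 1 := by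
  have hdim := (ℝ ∙ e).finrank_add_finrank_orthogonal
  rw [finrank_span_singleton (norm_ne_zero_iff.1 (he ▸ one_ne_zero))] at hdim
  rw [← hdim]
  push_cast
  ring

variable [MeasurableSpace E] [BorelSpace E]

theorem measurePreserving_smul_add_orthogonal (he : ‖e‖ = 1) :
    MeasurePreserving (fun p : ℝ × (ℝ ∙ e)ᗮ => p.1 • e + (p.2 : E)) := by
  have hspan := (LinearIsometryEquiv.toSpanUnitSingleton (𝕜 := ℝ) e he).measurePreserving
  have hpair := hspan.prod (MeasurePreserving.id (volume : Measure (ℝ ∙ e)ᗮ))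
  have hdecomp := (ℝ ∙ e).orthogonalDecomposition.symm.measurePreserving
  have hsplit := hdecomp.comp ((WithLp.volume_preserving_toLp (ℝ ∙ e) (ℝ ∙ e)ᗮ).comp hpair)
  rw [← Measure.volume_eq_prod] at hsplit
  convert hsplit using 1
  ext p
  simp

theorem lintegral_eq_lintegral_lintegral_smul_add_orthogonal (he : ‖e‖ = 1) {F : E → ℝ≥0∞}
    (hF : Measurable F) :
    ∫⁻ y, F y = ∫⁻ t : ℝ, ∫⁻ x : (ℝ ∙ e)ᗮ, F (t • e + x) := by
  have hsplit := measurePreserving_smul_add_orthogonal he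
  rw [← hsplit.lintegral_comp hF]
  exact lintegral_prod _ (hF.comp hsplit.measurable).aemeasurable

theorem lintegral_inner_mul_norm_sub_rpow (he : ‖e‖ = 1) {f : ℝ → ℝ≥0∞} (hf : Measurable f)
    (α s : ℝ) :
    ∫⁻ y, f ⟪e, y⟫ * ENNReal.ofReal (‖s • e - y‖ ^ (-(Module.finrank ℝ E - α))) =
      (∫⁻ x : (ℝ ∙ e)ᗮ, ENNReal.ofReal ((1 + ‖x‖ ^ 2) ^ (-(Module.finrank ℝ E - α) / 2))) *
        ∫⁻ t, f t * ENNReal.ofReal (|s - t| ^ (α - 1)) := by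
  rw [lintegral_eq_lintegral_lintegral_smul_add_orthogonal he (by fun_prop),
    ← lintegral_const_mul _ (by fun_prop)]
  refine lintegral_congr_ae ?_
  filter_upwards [Measure.ae_ne volume s] with t hts
  have hpos : 0 < |s - t| := abs_pos.2 (sub_ne_zero.2 hts.symm)
  simp only [inner_smul_add_orthogonal he, norm_smul_sub_smul_add_orthogonal_rpow he]
  rw [lintegral_const_mul _ (by fun_prop), lintegral_sq_add_norm_sq_rpow _ hpos,
    finrank_orthogonal_span_singleton_of_norm_eq_one he]
  ring_nf

theorem lintegral_orthogonal_one_add_norm_sq_rpow_ne_top (he : ‖e‖ = 1) {α : ℝ} (hα : α < 1) :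
    ∫⁻ x : (ℝ ∙ e)ᗮ, ENNReal.ofReal ((1 + ‖x‖ ^ 2) ^ (-(Module.finrank ℝ E - α) / 2)) ≠ ∞ := by
  have hdim := finrank_orthogonal_span_singleton_of_norm_eq_one he
  exact (integrable_rpow_neg_one_add_norm_sq (by linarith)).lintegral_lt_top.ne

end Slicing

section Dilation

variable {f K : ℝ → ℝ≥0∞}

theorem tendsto_lintegral_mul_comp_div_of_bounded (hf : Measurable f) (hK : Measurable K)
    (hfint : ∫⁻ t, f t ≠ ∞) {C : ℝ≥0∞} (hC : C ≠ ∞) (hKC : ∀ u, K u ≤ C)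
    (hKlim : Tendsto K (cocompact ℝ) (𝓝 0)) :
    Tendsto (fun s => ∫⁻ t, f t * K (t / s)) (𝓝[>] 0) (𝓝 0) := by
  have hlim : ∀ᵐ t, Tendsto (fun s => f t * K (t / s)) (𝓝[>] 0) (𝓝 0) := by
    filter_upwards [ae_lt_top hf hfint, Measure.ae_ne volume 0] with t hft ht
    have hdiv : Tendsto (fun s => t / s) (𝓝[>] 0) (cocompact ℝ) := by
      rw [← Metric.cobounded_eq_cocompact]
      simp only [div_eq_mul_inv]
      exact (tendsto_mul_left_cobounded ht).comp
        (tendsto_inv₀_nhdsNE_zero.mono_left (nhdsGT_le_nhdsNE 0))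
    simpa using ENNReal.Tendsto.const_mul (hKlim.comp hdiv) (Or.inr hft.ne)
  simpa using tendsto_lintegral_filter_of_dominated_convergence (fun t => f t * C)
    (Eventually.of_forall fun s => by fun_prop)
    (Eventually.of_forall fun s => ae_of_all _ fun t => mul_le_mul_right (hKC _) _)
    (by rw [lintegral_mul_const' _ _ hC]; exact ENNReal.mul_ne_top hfint hC) hlim

theorem lintegral_mul_indicator_comp_div_le (f : ℝ → ℝ≥0∞) (hK : Measurable K) {a b s : ℝ}
    (ha : 0 < a) (hs : 0 < s) :
    ∫⁻ t, f t * (Ioo a b).indicator K (t / s) ≤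
      (⨆ t ∈ Ioo (a * s) (b * s), ENNReal.ofReal t * f t) *
        (ENNReal.ofReal a⁻¹ * ∫⁻ u in Ioo a b, K u) := by
  set M := ⨆ t ∈ Ioo (a * s) (b * s), ENNReal.ofReal t * f t
  have hf {t : ℝ} (ht : t ∈ Ioo (a * s) (b * s)) : f t ≤ M * ENNReal.ofReal (a * s)⁻¹ := by
    have htpos : 0 < t := (mul_pos ha hs).trans ht.1
    calc f t = ENNReal.ofReal t * f t * ENNReal.ofReal t⁻¹ := by
          rw [mul_right_comm, ← ENNReal.ofReal_mul htpos.le, mul_inv_cancel₀ htpos.ne',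
            ENNReal.ofReal_one, one_mul]
      _ ≤ M * ENNReal.ofReal (a * s)⁻¹ := by
          gcongr
          · exact le_iSup₂_of_le t ht le_rfl
          · exact ht.1.le
  have hpoint (t : ℝ) : f t * (Ioo a b).indicator K (t / s) ≤
      M * ENNReal.ofReal (a * s)⁻¹ * (Ioo a b).indicator K (s⁻¹ • t) := by
    rw [smul_eq_mul, inv_mul_eq_div]
    by_cases ht : t / s ∈ Ioo a b
    · gcongr
      exact hf (by rwa [mem_Ioo, lt_div_iff₀ hs, div_lt_iff₀ hs] at ht)
    · simp [ht]
  have hcancel : ENNReal.ofReal (a * s)⁻¹ * ENNReal.ofReal s = ENNReal.ofReal a⁻¹ := by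
    rw [← ENNReal.ofReal_mul (by positivity), mul_inv_rev, mul_comm s⁻¹,
      inv_mul_cancel_right₀ hs.ne']
  refine (lintegral_mono hpoint).trans_eq ?_
  rw [lintegral_comp_inv_smul volume
      (fun u => M * ENNReal.ofReal (a * s)⁻¹ * (Ioo a b).indicator K u) hs,
    lintegral_const_mul _ (hK.indicator measurableSet_Ioo), lintegral_indicator measurableSet_Ioo,
    Module.finrank_self, pow_one, ← hcancel]
  ring

theorem tendsto_iSup_Ioo_mul_nhdsGT_zero {φ : ℝ → ℝ≥0∞} (hφ : Tendsto φ (𝓝[>] 0) (𝓝 0)) {a : ℝ}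
    (ha : 0 < a) (b : ℝ) :
    Tendsto (fun s => ⨆ t ∈ Ioo (a * s) (b * s), φ t) (𝓝[>] 0) (𝓝 0) := by
  refine ENNReal.tendsto_nhds_zero.2 fun ε hε => ?_
  obtain ⟨δ, hδ, hsub⟩ := mem_nhdsGT_iff_exists_Ioo_subset.1 (ENNReal.tendsto_nhds_zero.1 hφ ε hε)
  have hbδ : ∀ᶠ s in 𝓝[>] (0 : ℝ), b * s < δ :=
    nhdsWithin_le_nhds <|
      ((continuous_const_mul b).tendsto' 0 0 (mul_zero b)).eventually_lt_const hδ
  filter_upwards [hbδ, self_mem_nhdsWithin] with s hs hspos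
  exact iSup₂_le fun t ht => hsub ⟨(mul_pos ha hspos).trans ht.1, ht.2.trans hs⟩

theorem tendsto_lintegral_mul_indicator_comp_div (hK : Measurable K) {a b : ℝ} (ha : 0 < a)
    (hfzero : Tendsto (fun t => ENNReal.ofReal t * f t) (𝓝[>] 0) (𝓝 0))
    (hKint : ∫⁻ u in Ioo a b, K u ≠ ∞) :
    Tendsto (fun s => ∫⁻ t, f t * (Ioo a b).indicator K (t / s)) (𝓝[>] 0) (𝓝 0) := by
  have hbound := ENNReal.Tendsto.mul_const (tendsto_iSup_Ioo_mul_nhdsGT_zero hfzero ha b)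
    (Or.inr (ENNReal.mul_ne_top (ENNReal.ofReal_ne_top (r := a⁻¹)) hKint))
  rw [zero_mul] at hbound
  refine tendsto_of_tendsto_of_tendsto_of_le_of_le' tendsto_const_nhds hbound
    (Eventually.of_forall fun _ => zero_le) ?_
  filter_upwards [self_mem_nhdsWithin] with s hs
  exact lintegral_mul_indicator_comp_div_le f hK ha hs

theorem tendsto_lintegral_mul_comp_div (hf : Measurable f) (hK : Measurable K)
    (hfint : ∫⁻ t, f t ≠ ∞) (hfzero : Tendsto (fun t => ENNReal.ofReal t * f t) (𝓝[>] 0) (𝓝 0))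
    {a b : ℝ} (ha : 0 < a) (hKint : ∫⁻ u in Ioo a b, K u ≠ ∞) {C : ℝ≥0∞} (hC : C ≠ ∞)
    (hKC : ∀ u ∉ Ioo a b, K u ≤ C) (hKlim : Tendsto K (cocompact ℝ) (𝓝 0)) :
    Tendsto (fun s => ∫⁻ t, f t * K (t / s)) (𝓝[>] 0) (𝓝 0) := by
  have hnear := tendsto_lintegral_mul_indicator_comp_div hK ha hfzero hKint
  have hfar := tendsto_lintegral_mul_comp_div_of_bounded hf (hK.indicator measurableSet_Ioo.compl)
    hfint hC (fun u => indicator_le' hKC (fun _ _ => zero_le) u)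
    (tendsto_nhds_bot_mono' hKlim (indicator_le_self _ _))
  rw [← add_zero (0 : ℝ≥0∞)]
  refine (hnear.add hfar).congr fun s => ?_
  have hmeas : Measurable fun t => f t * (Ioo a b).indicator K (t / s) :=
    hf.mul ((hK.indicator measurableSet_Ioo).comp (by fun_prop))
  rw [← lintegral_add_left hmeas]
  refine lintegral_congr fun t => ?_
  rw [← mul_add, indicator_self_add_compl_apply]

end Dilation

section Kernel

theorem lintegral_Ioo_abs_one_sub_rpow_ne_top {α : ℝ} (hα : 0 < α) :
    ∫⁻ u in Ioo (1 / 2 : ℝ) (3 / 2), ENNReal.ofReal (|1 - u| ^ (α - 1)) ≠ ∞ := by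
  have hball : IntegrableOn (fun u : ℝ => |u| ^ (α - 1)) (Metric.ball 0 (1 / 2)) :=
    integrableOn_ball_of_norm_le_rpow (C := 1) (α := 1 - α) (by simp) (by simpa)
      (ae_of_all _ fun u => by
        rw [Real.norm_of_nonneg (by positivity), Real.norm_eq_abs, one_mul, neg_sub])
      (by fun_prop : Measurable fun u : ℝ => |u| ^ (α - 1)).aestronglyMeasurable
  have hpre : Ioo (1 / 2 : ℝ) (3 / 2) = (fun u => 1 - u) ⁻¹' Metric.ball 0 (1 / 2) := by
    simp only [Real.ball_eq_Ioo, preimage_const_sub_Ioo]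
    norm_num
  have hcomp := (Measure.measurePreserving_sub_left volume (1 : ℝ)).setLIntegral_comp_preimage
    (measurableSet_ball (x := 0) (ε := 1 / 2))
    (by fun_prop : Measurable fun u : ℝ => ENNReal.ofReal (|u| ^ (α - 1)))
  rw [hpre, hcomp]
  exact hball.setLIntegral_lt_top.ne

theorem tendsto_abs_one_sub_rpow_cocompact {α : ℝ} (hα : α < 1) :
    Tendsto (fun u : ℝ => |1 - u| ^ (α - 1)) (cocompact ℝ) (𝓝 0) := by
  have habs : Tendsto (fun u : ℝ => |1 - u|) (cocompact ℝ) atTop :=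
    tendsto_norm_cocompact_atTop.comp
      (Homeomorph.subLeft (1 : ℝ)).isClosedEmbedding.tendsto_cocompact
  rw [← neg_sub 1 α]
  exact (tendsto_rpow_neg_atTop (sub_pos.2 hα)).comp habs

theorem tendsto_rpow_mul_lintegral_mul_abs_sub_rpow {f : ℝ → ℝ≥0∞} (hf : Measurable f)
    (hfint : ∫⁻ t, f t ≠ ∞) (hfzero : Tendsto (fun t => ENNReal.ofReal t * f t) (𝓝[>] 0) (𝓝 0))
    {α : ℝ} (hα : α ∈ Ioo (0 : ℝ) 1) :
    Tendsto (fun s => ENNReal.ofReal (s ^ (1 - α)) *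
      ∫⁻ t, f t * ENNReal.ofReal (|s - t| ^ (α - 1))) (𝓝[>] 0) (𝓝 0) := by
  have hbound : ∀ u ∉ Ioo (1 / 2 : ℝ) (3 / 2),
      ENNReal.ofReal (|1 - u| ^ (α - 1)) ≤ ENNReal.ofReal ((1 / 2) ^ (α - 1)) := fun u hu => by
    have hhalf : 1 / 2 ≤ |1 - u| := by
      by_contra! hlt
      exact hu (by constructor <;> linarith [abs_lt.1 hlt])
    exact ENNReal.ofReal_le_ofReal
      (Real.rpow_le_rpow_of_nonpos (by norm_num) hhalf (by linarith [hα.2]))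
  have hlim := ENNReal.tendsto_ofReal (tendsto_abs_one_sub_rpow_cocompact hα.2)
  rw [ENNReal.ofReal_zero] at hlim
  refine (tendsto_lintegral_mul_comp_div hf (by fun_prop) hfint hfzero (by norm_num)
    (lintegral_Ioo_abs_one_sub_rpow_ne_top hα.1) ENNReal.ofReal_ne_top hbound hlim).congr' ?_
  filter_upwards [self_mem_nhdsWithin] with s (hs : 0 < s)
  have hhom (t : ℝ) : |1 - t / s| ^ (α - 1) = s ^ (1 - α) * |s - t| ^ (α - 1) := by
    rw [one_sub_div hs.ne', abs_div, abs_of_pos hs, Real.div_rpow (abs_nonneg _) hs.le,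
      ← neg_sub α 1, Real.rpow_neg hs.le]
    ring
  rw [← lintegral_const_mul' _ _ ENNReal.ofReal_ne_top]
  refine lintegral_congr fun t => ?_
  rw [hhom, ENNReal.ofReal_mul (by positivity)]
  ring

end Kernel

section Weight

theorem measurable_indicator_of_antitoneOn {f : ℝ → ℝ≥0∞} {s : Set ℝ} (hs : MeasurableSet s)
    (hf : AntitoneOn f s) : Measurable (s.indicator f) := by
  refine measurable_of_restrict_of_restrict_compl hs ?_ ?_
  · rw [domRestrict_eq_domRestrict_iff.2 eqOn_indicator]
    exact Antitone.measurable fun x y hxy => hf x.2 y.2 hxy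
  · rw [domRestrict_eq_domRestrict_iff.2 eqOn_indicator']
    exact measurable_zero

theorem tendsto_setLIntegral_Ioo_nhdsGT_zero {f : ℝ → ℝ≥0∞} {η : ℝ} (hη : 0 < η)
    (hf : ∫⁻ t in Ioo 0 η, f t ≠ ∞) :
    Tendsto (fun s => ∫⁻ t in Ioo 0 s, f t) (𝓝[>] 0) (𝓝 0) := by
  have hvol : Tendsto (fun s => (volume.restrict (Ioo 0 η)) (Ioo 0 s)) (𝓝[>] 0) (𝓝 0) := by
    have hs : Tendsto (fun s : ℝ => volume (Ioo 0 s)) (𝓝[>] 0) (𝓝 0) := by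
      simpa [Real.volume_Ioo] using
        ENNReal.tendsto_ofReal (tendsto_nhdsWithin_of_tendsto_nhds (tendsto_id (x := 𝓝 (0 : ℝ))))
    exact tendsto_nhds_bot_mono' hs fun s => Measure.restrict_apply_le _ _
  refine (tendsto_setLIntegral_zero hf hvol).congr' ?_
  filter_upwards [Ioo_mem_nhdsGT hη] with s hs
  rw [Measure.restrict_restrict measurableSet_Ioo,
    inter_eq_left.2 (Ioo_subset_Ioo_right hs.2.le)]

theorem ofReal_mul_rpow_mul_le_setLIntegral_Ioo {h : ℝ → ℝ≥0∞} (hanti : AntitoneOn h (Ioi 0))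
    {β : ℝ} (hβ : 0 ≤ β) {s : ℝ} (hs : 0 < s) :
    ENNReal.ofReal s * (ENNReal.ofReal (s ^ β) * h s) ≤
      ENNReal.ofReal (2 ^ (β + 1)) * ∫⁻ t in Ioo 0 s, ENNReal.ofReal (t ^ β) * h t := by
  calc ENNReal.ofReal s * (ENNReal.ofReal (s ^ β) * h s)
      = ENNReal.ofReal (2 ^ (β + 1)) *
          ∫⁻ _ in Ioo (s / 2) s, ENNReal.ofReal ((s / 2) ^ β) * h s := by
        have hsplit : s * s ^ β = 2 ^ (β + 1) * ((s / 2) ^ β * (s - s / 2)) := by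
          rw [Real.div_rpow hs.le zero_le_two, Real.rpow_add_one two_ne_zero]
          field_simp
          ring
        rw [setLIntegral_const, Real.volume_Ioo, ← mul_assoc, ← ENNReal.ofReal_mul hs.le, hsplit,
          ENNReal.ofReal_mul (by positivity), ENNReal.ofReal_mul (by positivity)]
        ring
    _ ≤ ENNReal.ofReal (2 ^ (β + 1)) *
          ∫⁻ t in Ioo (s / 2) s, ENNReal.ofReal (t ^ β) * h t := by
        gcongr ENNReal.ofReal _ * ?_
        refine setLIntegral_mono' measurableSet_Ioo fun t ht => ?_
        have htpos : 0 < t := (half_pos hs).trans ht.1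
        gcongr
        · exact ht.1.le
        · exact hanti htpos hs ht.2.le
    _ ≤ ENNReal.ofReal (2 ^ (β + 1)) * ∫⁻ t in Ioo 0 s, ENNReal.ofReal (t ^ β) * h t := by
        gcongr
        exact (half_pos hs).le

theorem tendsto_ofReal_mul_rpow_mul_nhdsGT_zero {h : ℝ → ℝ≥0∞} (hanti : AntitoneOn h (Ioi 0))
    {β : ℝ} (hβ : 0 ≤ β) {η : ℝ} (hη : 0 < η)
    (hfin : ∫⁻ t in Ioo 0 η, ENNReal.ofReal (t ^ β) * h t ≠ ∞) :
    Tendsto (fun s => ENNReal.ofReal s * (ENNReal.ofReal (s ^ β) * h s)) (𝓝[>] 0) (𝓝 0) := by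
  have hbound := ENNReal.Tendsto.const_mul (tendsto_setLIntegral_Ioo_nhdsGT_zero hη hfin)
    (Or.inr (ENNReal.ofReal_ne_top (r := 2 ^ (β + 1))))
  rw [mul_zero] at hbound
  refine tendsto_of_tendsto_of_tendsto_of_le_of_le' tendsto_const_nhds hbound
    (Eventually.of_forall fun _ => zero_le) ?_
  filter_upwards [self_mem_nhdsWithin] with s hs
  exact ofReal_mul_rpow_mul_le_setLIntegral_Ioo hanti hβ hs

theorem image_const_mul_rpow_Ioi {k q : ℝ} (hk : 0 < k) (hq : q ≠ 0) :
    (fun t => k * t ^ q) '' Ioi 0 = Ioi 0 := by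
  refine Subset.antisymm ?_ fun s (hs : 0 < s) => ⟨(s / k) ^ q⁻¹, mem_Ioi.2 (by positivity), ?_⟩
  · rintro _ ⟨t, ht : 0 < t, rfl⟩
    exact mem_Ioi.2 (by positivity)
  · simp only
    rw [Real.rpow_inv_rpow (by positivity) hq, mul_div_cancel₀ _ hk.ne']

theorem lintegral_rpow_mul_comp_const_mul_rpow (u : ℝ → ℝ≥0∞) {k q : ℝ} (hk : 0 < k) (hq : q ≠ 0)
    (β : ℝ) :
    ∫⁻ t in Ioi 0, ENNReal.ofReal (t ^ β) * u (k * t ^ q) =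
      ENNReal.ofReal (|q|⁻¹ * k ^ (-(β + 1) / q)) *
        ∫⁻ s in Ioi 0, ENNReal.ofReal (s ^ ((β + 1) / q - 1)) * u s := by
  have hderiv : ∀ t ∈ Ioi (0 : ℝ),
      HasDerivWithinAt (fun t => k * t ^ q) (k * (q * t ^ (q - 1))) (Ioi 0) t := fun t ht =>
    ((Real.hasDerivAt_rpow_const (Or.inl (ne_of_gt ht))).const_mul k).hasDerivWithinAt
  have hinj : InjOn (fun t => k * t ^ q) (Ioi 0) := fun x hx y hy hxy =>
    (Real.rpow_left_inj (le_of_lt hx) (le_of_lt hy) hq).1 (mul_left_cancel₀ hk.ne' hxy)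
  have hjacobian {t : ℝ} (ht : 0 < t) : t ^ β = |q|⁻¹ * k ^ (-(β + 1) / q) *
      (|k * (q * t ^ (q - 1))| * (k * t ^ q) ^ ((β + 1) / q - 1)) := by
    have hexp : q * ((β + 1) / q - 1) = β - (q - 1) := by
      field_simp
      ring
    rw [abs_mul, abs_mul, abs_of_pos hk, abs_of_pos (by positivity : 0 < t ^ (q - 1)),
      Real.mul_rpow hk.le (by positivity), ← Real.rpow_mul ht.le, hexp, Real.rpow_sub ht β,
      Real.rpow_sub_one hk.ne', neg_div, Real.rpow_neg hk.le]
    field_simp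
  have hcov := lintegral_image_eq_lintegral_abs_deriv_mul measurableSet_Ioi hderiv hinj
    fun s => ENNReal.ofReal (s ^ ((β + 1) / q - 1)) * u s
  rw [image_const_mul_rpow_Ioi hk hq] at hcov
  rw [hcov, ← lintegral_const_mul' _ _ ENNReal.ofReal_ne_top]
  refine setLIntegral_congr_fun measurableSet_Ioi fun t (ht : 0 < t) => ?_
  rw [hjacobian ht, ENNReal.ofReal_mul (by positivity), ENNReal.ofReal_mul (abs_nonneg _)]
  ring

theorem antitoneOn_comp_const_mul_rpow {β : Type*} [Preorder β] {g : ℝ → β}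
    (hg : MonotoneOn g (Ioi 0)) {k q : ℝ} (hk : 0 < k) (hq : q ≤ 0) :
    AntitoneOn (fun t => g (k * t ^ q)) (Ioi 0) := by
  intro s (hs : 0 < s) t (ht : 0 < t) hst
  have hle : k * t ^ q ≤ k * s ^ q :=
    mul_le_mul_of_nonneg_left (Real.rpow_le_rpow_of_nonpos hs hst hq) hk.le
  exact hg (mem_Ioi.2 (by positivity)) (mem_Ioi.2 (by positivity)) hle

theorem lintegral_Ioo_rpow_mul_comp_const_mul_rpow_ne_top {φ : ℝ → ℝ≥0∞}
    (hmono : MonotoneOn φ (Ioi 0)) (hone : φ 1 ≠ ∞) {k q : ℝ} (hk : 0 < k) (hq : q ≠ 0) {β : ℝ}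
    (hβ : 0 ≤ β) (hfin : ∫⁻ s in Ioi 1, ENNReal.ofReal (s ^ ((β + 1) / q - 1)) * φ s ≠ ∞) (η : ℝ) :
    ∫⁻ t in Ioo 0 η, ENNReal.ofReal (t ^ β) * φ (k * t ^ q) ≠ ∞ := by
  set ψ := (Ioi 1).indicator φ
  have hφ {s : ℝ} (hs : 0 < s) : φ s ≤ φ 1 + ψ s := by
    rcases le_or_gt s 1 with hle | hlt
    · exact le_add_right (hmono hs (mem_Ioi.2 one_pos) hle)
    · exact le_add_left (indicator_of_mem (mem_Ioi.2 hlt) φ).ge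
  have hψ : ∫⁻ t in Ioi 0, ENNReal.ofReal (t ^ β) * ψ (k * t ^ q) ≠ ∞ := by
    have hrestrict (s : ℝ) : ENNReal.ofReal (s ^ ((β + 1) / q - 1)) * ψ s =
        (Ioi 1).indicator (fun s => ENNReal.ofReal (s ^ ((β + 1) / q - 1)) * φ s) s :=
      (indicator_mul_right (Ioi 1) (fun s => ENNReal.ofReal (s ^ ((β + 1) / q - 1))) φ).symm
    rw [lintegral_rpow_mul_comp_const_mul_rpow ψ hk hq]
    simp only [hrestrict]
    rw [setLIntegral_indicator measurableSet_Ioi, inter_eq_left.2 (Ioi_subset_Ioi zero_le_one)]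
    exact ENNReal.mul_ne_top ENNReal.ofReal_ne_top hfin
  have hpoint : ∀ t ∈ Ioo 0 η, ENNReal.ofReal (t ^ β) * φ (k * t ^ q) ≤
      ENNReal.ofReal (η ^ β) * φ 1 + ENNReal.ofReal (t ^ β) * ψ (k * t ^ q) := fun t ht => by
    have htpos : 0 < t := ht.1
    grw [hφ (by positivity : 0 < k * t ^ q), mul_add]
    gcongr
    exact ht.2.le
  refine ne_top_of_le_ne_top ?_ (setLIntegral_mono' measurableSet_Ioo hpoint)
  rw [lintegral_add_left measurable_const, setLIntegral_const]
  refine ENNReal.add_ne_top.2 ⟨ENNReal.mul_ne_top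
    (ENNReal.mul_ne_top ENNReal.ofReal_ne_top hone) measure_Ioo_lt_top.ne, ?_⟩
  exact ne_top_of_le_ne_top hψ (lintegral_mono_set Ioo_subset_Ioi_self)

end Weight

section HalfSpace

variable {E : Type*} [NormedAddCommGroup E] [InnerProductSpace ℝ E] [FiniteDimensional ℝ E]
  [MeasurableSpace E] [BorelSpace E] {e : E}

theorem tendsto_rpow_mul_lintegral_inner_mul_norm_sub_rpow (he : ‖e‖ = 1) {f : ℝ → ℝ≥0∞}
    (hf : Measurable f) (hfint : ∫⁻ t, f t ≠ ∞)
    (hfzero : Tendsto (fun t => ENNReal.ofReal t * f t) (𝓝[>] 0) (𝓝 0))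
    {α : ℝ} (hα : α ∈ Ioo (0 : ℝ) 1) :
    Tendsto (fun s : ℝ => ENNReal.ofReal (s ^ (1 - α)) *
      ∫⁻ y, f ⟪e, y⟫ * ENNReal.ofReal (‖s • e - y‖ ^ (-(Module.finrank ℝ E - α))))
      (𝓝[>] 0) (𝓝 0) := by
  have hlim := tendsto_rpow_mul_lintegral_mul_abs_sub_rpow hf hfint hfzero hα
  have hconst := lintegral_orthogonal_one_add_norm_sq_rpow_ne_top he hα.2
  simp_rw [lintegral_inner_mul_norm_sub_rpow he hf, mul_left_comm (ENNReal.ofReal _)]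
  simpa using ENNReal.Tendsto.const_mul hlim (Or.inr hconst)

theorem tendsto_rpow_mul_setLIntegral_rpow_mul_norm_sub_rpow (he : ‖e‖ = 1) {h : ℝ → ℝ≥0∞}
    (hanti : AntitoneOn h (Ioi 0)) {β : ℝ} (hβ : 0 ≤ β) {η : ℝ} (hη : 0 < η)
    (hfin : ∫⁻ t in Ioo 0 η, ENNReal.ofReal (t ^ β) * h t ≠ ∞) {α : ℝ} (hα : α ∈ Ioo (0 : ℝ) 1) :
    Tendsto (fun s : ℝ => ENNReal.ofReal (s ^ (1 - α)) *
      ∫⁻ y in {y : E | ⟪e, y⟫ ∈ Ioo 0 η}, ENNReal.ofReal (⟪e, y⟫ ^ β) * h ⟪e, y⟫ *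
        ENNReal.ofReal (‖s • e - y‖ ^ (-(Module.finrank ℝ E - α))))
      (𝓝[>] 0) (𝓝 0) := by
  let w : ℝ → ℝ≥0∞ := fun t => ENNReal.ofReal (t ^ β) * h t
  have hmeas : Measurable ((Ioo 0 η).indicator w) := by
    have hw : (Ioo 0 η).indicator w =
        (fun t => ENNReal.ofReal (t ^ β)) * (Ioo 0 η).indicator h :=
      funext fun _ => indicator_mul_right _ (fun t => ENNReal.ofReal (t ^ β)) h
    rw [hw]
    exact (by fun_prop : Measurable fun t : ℝ => ENNReal.ofReal (t ^ β)).mul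
      (measurable_indicator_of_antitoneOn measurableSet_Ioo (hanti.mono Ioo_subset_Ioi_self))
  have hint : ∫⁻ t, (Ioo 0 η).indicator w t ≠ ∞ := by
    rwa [lintegral_indicator measurableSet_Ioo]
  have hzero : Tendsto (fun t => ENNReal.ofReal t * (Ioo 0 η).indicator w t) (𝓝[>] 0) (𝓝 0) := by
    refine (tendsto_ofReal_mul_rpow_mul_nhdsGT_zero hanti hβ hη hfin).congr' ?_
    filter_upwards [Ioo_mem_nhdsGT hη] with t ht
    rw [indicator_of_mem ht]
  have hslab : MeasurableSet {y : E | ⟪e, y⟫ ∈ Ioo 0 η} :=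
    measurableSet_Ioo.preimage (by fun_prop)
  refine (tendsto_rpow_mul_lintegral_inner_mul_norm_sub_rpow he hmeas hint hzero hα).congr
    fun s => ?_
  rw [← lintegral_indicator hslab]
  congr 2 with y
  simp only [indicator, mem_ofPred_eq, ite_mul, zero_mul, w]

theorem stmt_13_general (he : ‖e‖ = 1) {α η k : ℝ} (hα : α ∈ Ioo (0 : ℝ) 1) (hη : 0 < η)
    (hk : 0 < k) {g : ℝ → ℝ} (hg_mono : MonotoneOn g (Ioi 0)) (hg_nonneg : ∀ s > 0, 0 ≤ g s)
    (hg_int : ∫⁻ s in Ioi 1, ENNReal.ofReal (g s * s ^ (-1 - (1 + α) / (1 - α))) < ∞) :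
    Tendsto (fun s : ℝ => ENNReal.ofReal (s ^ (1 - α)) *
      ∫⁻ y in {y : E | ⟪e, y⟫ ∈ Ioo 0 η}, ENNReal.ofReal (⟪e, y⟫ ^ α *
        ‖s • e - y‖ ^ (-(Module.finrank ℝ E - α)) * g (k * ⟪e, y⟫ ^ (α - 1))))
      (𝓝[>] 0) (𝓝 0) := by
  have hα1 : α - 1 < 0 := sub_neg.2 hα.2
  have hanti : AntitoneOn (fun t => ENNReal.ofReal (g (k * t ^ (α - 1)))) (Ioi 0) :=
    ENNReal.ofReal_mono.comp_antitoneOn (antitoneOn_comp_const_mul_rpow hg_mono hk hα1.le)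
  have hg_int' : ∫⁻ s in Ioi 1, ENNReal.ofReal (s ^ ((α + 1) / (α - 1) - 1)) *
      ENNReal.ofReal (g s) ≠ ∞ := by
    have hexp : (α + 1) / (α - 1) - 1 = -1 - (1 + α) / (1 - α) := by
      rw [← neg_sub 1 α, div_neg]
      ring
    convert hg_int.ne using 1
    refine setLIntegral_congr_fun measurableSet_Ioi fun s (hs : 1 < s) => ?_
    rw [hexp, ENNReal.ofReal_mul (hg_nonneg s (one_pos.trans hs)), mul_comm]
  have hweight := lintegral_Ioo_rpow_mul_comp_const_mul_rpow_ne_top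
    (ENNReal.ofReal_mono.comp_monotoneOn hg_mono) ENNReal.ofReal_ne_top hk hα1.ne hα.1.le hg_int' η
  refine (tendsto_rpow_mul_setLIntegral_rpow_mul_norm_sub_rpow he hanti hα.1.le hη hweight hα).congr
    fun s => ?_
  congr 1
  refine setLIntegral_congr_fun (measurableSet_Ioo.preimage (by fun_prop)) fun y hy => ?_
  have hpow : 0 < ⟪e, y⟫ ^ α := Real.rpow_pos_of_pos hy.1 α
  rw [ENNReal.ofReal_mul (by positivity), ENNReal.ofReal_mul hpow.le, mul_right_comm]

end HalfSpace

/-- Flat (half-space) model of the boundary estimate: for `N ≥ 2`, `α ∈ (0,1)`, `η, k > 0`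
and `g : (0,∞) → [0,∞)` continuous nondecreasing with
`∫_1^∞ g(s) s^{-1-(1+α)/(1-α)} ds < ∞`,
`s^{1-α} ∫_{Q_η} y_N^α |s e_N - y|^{-(N-α)} g(k y_N^{α-1}) dy → 0` as `s → 0⁺`,
where `Q_η = {y = (y',y_N) : |y'| < η, 0 < y_N < η}`, `iN` is the index of the last
coordinate and `e_N` the corresponding unit vector. -/
theorem stmt_13 (N : ℕ) (hN : 2 ≤ N) (iN : Fin N) (hiN : (iN : ℕ) = N - 1)
    (α η k : ℝ) (hα : α ∈ Ioo (0:ℝ) 1) (hη : 0 < η) (hk : 0 < k) (g : ℝ → ℝ)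
    (hg_cont : ContinuousOn g (Ioi (0:ℝ))) (hg_mono : MonotoneOn g (Ioi (0:ℝ)))
    (hg_nonneg : ∀ s > (0:ℝ), 0 ≤ g s)
    (hg_int : ∫⁻ s in Ioi (1:ℝ), ENNReal.ofReal (g s * s ^ (-1 - (1+α)/(1-α))) < ⊤) :
    Tendsto
      (fun s : ℝ => ENNReal.ofReal (s ^ (1 - α)) *
        ∫⁻ y in {y : EuclideanSpace ℝ (Fin N) |
            Real.sqrt (∑ i ∈ Finset.univ.erase iN, (y i) ^ 2) < η ∧
            0 < y iN ∧ y iN < η},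
          ENNReal.ofReal ((y iN) ^ α *
            ‖s • EuclideanSpace.single iN (1:ℝ) - y‖ ^ (-((N:ℝ) - α)) *
            g (k * (y iN) ^ (α - 1))))
      (nhdsWithin 0 (Ioi (0:ℝ))) (nhds 0) := by
  have hslab := stmt_13_general (e := EuclideanSpace.single iN (1 : ℝ)) (by simp) hα hη hk
    hg_mono hg_nonneg hg_int
  simp only [EuclideanSpace.inner_single_left, map_one, one_mul, finrank_euclideanSpace,
    Fintype.card_fin] at hslab
  exact tendsto_nhds_bot_mono' hslab fun s =>
    mul_le_mul_right (lintegral_mono_set fun y hy => hy.2) _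
end
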